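/- Let Ω ⊂ ℂⁿ (n ≥ 2) be a bounded domain and U ⊆ ℂⁿ an open set such that Ω ∩ U is log-type convex. Then for every κ ≥ 0 and any two distinct points ξ, ξ′ ∈ ∂Ω ∩ U, there exist ε > 0 and a compact set A ⊆ Ω ∩ U with the following property: for every z ∈ Ω ∩ B_ε(ξ), every ω ∈ Ω ∩ B_ε(ξ′), and every (1,κ)-almost geodesic σ : [0,T] → Ω (for the Kobayashi distance K_Ω) joining z and ω, the image of σ intersects A. -/

import Mathlib

open Metric Set MeasureTheory Filter Topology

noncomputable section

variable {E : Type*} [NormedAddCommGroup E] [NormedSpace ℂ E]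

/-- Distance from `x` to the boundary of `D`. -/
def bdist (D : Set E) (x : E) : ℝ := Metric.infDist x (frontier D)

/-- Distance from `x` to the boundary of `D` along the complex line `x + ℂ v`. -/
def bdistDir (D : Set E) (x v : E) : ℝ :=
  Metric.infDist x (frontier D ∩ {w | ∃ c : ℂ, w = x + c • v})

/-- The infinitesimal Kobayashi (pseudo-)metric of `D ⊆ E`. -/
def kobMetric (D : Set E) (x v : E) : ℝ :=
  sInf { r : ℝ | ∃ (f : ℂ → E) (ξ : ℂ),
    DifferentiableOn ℂ f (ball (0:ℂ) 1) ∧ MapsTo f (ball (0:ℂ) 1) D ∧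
    f 0 = x ∧ ξ • derivWithin f (ball (0:ℂ) 1) 0 = v ∧ r = ‖ξ‖ }

/-- `σ` is absolutely continuous on `[a,b]`, with a.e. derivative `g`. -/
def IsACWithDeriv (σ g : ℝ → E) (a b : ℝ) : Prop :=
  IntervalIntegrable g volume a b ∧
  ∀ t ∈ Icc a b, σ t = σ a + ∫ s in a..t, g s

/-- The Kobayashi pseudo-distance of `D`, defined via lengths of absolutely
continuous curves (Venturini's description). -/
def kobDist (D : Set E) (x y : E) : ℝ :=
  sInf { r : ℝ | ∃ (a b : ℝ) (σ g : ℝ → E), a ≤ b ∧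
    IsACWithDeriv σ g a b ∧ MapsTo σ (Icc a b) D ∧ σ a = x ∧ σ b = y ∧
    r = ∫ t in a..b, kobMetric D (σ t) (g t) }

/-- Log-type convex domain, with explicit constants `C, ν > 0`. -/
def LogTypeConvexWith (D : Set E) (C ν : ℝ) : Prop :=
  IsOpen D ∧ D.Nonempty ∧ Bornology.IsBounded D ∧ Convex ℝ D ∧ 0 < C ∧ 0 < ν ∧
  ∀ z ∈ D, ∀ v : E, v ≠ 0 →
    bdistDir D z v ≤ C / |Real.log (bdist D z)| ^ (1 + ν)

/-- Log-type convex domain. -/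
def LogTypeConvex (D : Set E) : Prop := ∃ C ν : ℝ, LogTypeConvexWith D C ν

/-- A `ℂ`-convex set: every nonempty intersection with a complex affine line is
connected and simply connected. -/
def CConvex (D : Set E) : Prop :=
  ∀ z v : E, v ≠ 0 → (D ∩ {w | ∃ c : ℂ, w = z + c • v}).Nonempty →
    IsConnected (D ∩ {w | ∃ c : ℂ, w = z + c • v}) ∧
    SimplyConnectedSpace ↥(D ∩ {w | ∃ c : ℂ, w = z + c • v})

/-- Log-type `ℂ`-convex domain. -/
def LogTypeCConvex (D : Set E) : Prop :=
  IsOpen D ∧ D.Nonempty ∧ Bornology.IsBounded D ∧ CConvex D ∧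
  ∃ C ν : ℝ, 0 < C ∧ 0 < ν ∧
    ∀ z ∈ D, ∀ v : E, v ≠ 0 →
      bdistDir D z v ≤ C / |Real.log (bdist D z)| ^ (1 + ν)

/-- `σ : [a,b] → D` (with a.e. derivative `g`) is a `(λ,κ)`-almost geodesic for the
Kobayashi distance of `D`. -/
def AlmostGeodesicOn (D : Set E) (lam kap : ℝ) (σ g : ℝ → E) (a b : ℝ) : Prop :=
  MapsTo σ (Icc a b) D ∧ IsACWithDeriv σ g a b ∧
  (∀ s ∈ Icc a b, ∀ t ∈ Icc a b,
    (1 / lam) * |t - s| - kap ≤ kobDist D (σ s) (σ t) ∧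
    kobDist D (σ s) (σ t) ≤ lam * |t - s| + kap) ∧
  (∀ᵐ t ∂volume, t ∈ Icc a b → kobMetric D (σ t) (g t) ≤ lam)

/-- `σ : [a,b] → D` is a `C`-rough geodesic for the Kobayashi distance of `D`. -/
def RoughGeodesicOn (D : Set E) (C : ℝ) (σ : ℝ → E) (a b : ℝ) : Prop :=
  MapsTo σ (Icc a b) D ∧
  ∀ s ∈ Icc a b, ∀ t ∈ Icc a b,
    |t - s| - C ≤ kobDist D (σ s) (σ t) ∧ kobDist D (σ s) (σ t) ≤ |t - s| + C

/-- `ρ` is a `C¹` local defining function for `D` near `ξ` on the open set `W`. -/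
def IsLocalDefiningFn (D : Set E) (ξ : E) (W : Set E) (ρ : E → ℝ) : Prop :=
  IsOpen W ∧ ξ ∈ W ∧ ContDiffOn ℝ 1 ρ W ∧ (∀ x ∈ W, fderiv ℝ ρ x ≠ 0) ∧
  D ∩ W = {x ∈ W | ρ x < 0} ∧ frontier D ∩ W = {x ∈ W | ρ x = 0}

/-- `ξ` is a Dini-smooth boundary point of `D`: the boundary is `C¹` near `ξ` and the
unit normal admits a modulus of continuity `ω` satisfying the Dini condition. -/
def DiniSmoothBoundaryPoint (D : Set E) (ξ : E) : Prop :=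
  ∃ (W : Set E) (ρ : E → ℝ) (ω : ℝ → ℝ),
    IsLocalDefiningFn D ξ W ρ ∧
    (∀ t ∈ Icc (0:ℝ) 1, 0 ≤ ω t) ∧ MonotoneOn ω (Icc (0:ℝ) 1) ∧
    IntegrableOn (fun t => ω t / t) (Ioc (0:ℝ) 1) ∧
    ∀ x ∈ frontier D ∩ W, ∀ y ∈ frontier D ∩ W, ‖x - y‖ ≤ 1 →
      ‖(‖fderiv ℝ ρ x‖)⁻¹ • fderiv ℝ ρ x - (‖fderiv ℝ ρ y‖)⁻¹ • fderiv ℝ ρ y‖ ≤ ω ‖x - y‖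

/-- `D` has `C^{1,ε}` boundary: near every boundary point there is a `C¹` defining
function whose differential is `ε`-Hölder. -/
def HolderC1Boundary (D : Set E) (ε : ℝ) : Prop :=
  ∀ ξ ∈ frontier D, ∃ (W : Set E) (ρ : E → ℝ) (M : ℝ), 0 < M ∧
    IsLocalDefiningFn D ξ W ρ ∧
    ∀ x ∈ W, ∀ y ∈ W, ‖fderiv ℝ ρ x - fderiv ℝ ρ y‖ ≤ M * ‖x - y‖ ^ ε

/-- The complex affine tangent hyperplane of `∂D` at `x`, computed from a local
defining function `ρ`. -/
def complexTangentHyperplane (ρ : E → ℝ) (x : E) : Set E :=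
  {w : E | fderiv ℝ ρ x (w - x) = 0 ∧ fderiv ℝ ρ x ((Complex.I : ℂ) • (w - x)) = 0}

/-- The Gromov product of `x` and `y` with respect to the base point `o`, for the
Kobayashi distance of `D`. -/
def gromovProd (D : Set E) (o x y : E) : ℝ :=
  (kobDist D x o + kobDist D o y - kobDist D x y) / 2

end

/-!
The Kobayashi metric is controlled from both sides near `ξ`. From below: a holomorphic disc in the
bounded set `Ω` centred at `x` stays in the convex set `D = Ω ∩ U` on a smaller concentric disc
(Schwarz lemma), and a disc in a convex set contains, up to a factor `2`, the linear disc spanned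
by its derivative (Borel–Carathéodory for a separating functional). Hence `‖v‖` is at most a
constant times `bdistDir D x v * kobMetric Ω x v`, and log-type convexity bounds `bdistDir D x v`
by a power `-(1 + ν)` of `log (1 / bdist D x)`. From above: a quadratic arc through a fixed
interior point shows that `kobDist Ω x y` is at most a constant times the sum of the logarithms of
`1 / bdist D x` and `1 / bdist D y`.

Consider an almost geodesic lying within `exp (-N)` of `∂D`, and let `t₀` be the time at which it
is deepest in `D`. The upper bound forces `log (1 / bdist D (σ t))` to be at least a constant times
`N + |t - t₀|`, so by the lower bound the Euclidean speed is `O((N + |t - t₀|) ^ (-(1 + ν)))`,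
whose integral is `O(N ^ (-ν))`. For large `N` such a curve is too short to leave a small ball
around `ξ`, so every almost geodesic that does leave it meets `{x ∈ D | exp (-N) ≤ bdist D x}`,
which is compact.
-/

section BoundaryDistance

variable {E : Type*} [NormedAddCommGroup E] {D : Set E} {x v : E}

theorem bdist_pos (hD : IsOpen D) (hfr : (frontier D).Nonempty) (hx : x ∈ D) : 0 < bdist D x :=
  (isClosed_frontier.notMem_iff_infDist_pos hfr).1
    fun h => (disjoint_frontier_iff_isOpen.2 hD).le_bot ⟨h, hx⟩

theorem continuous_bdist (D : Set E) : Continuous (bdist D) :=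
  continuous_infDist_pt _

theorem isCompact_setOf_le_bdist [ProperSpace E] (hD : Bornology.IsBounded D) {η : ℝ}
    (hη : 0 < η) : IsCompact {x ∈ D | η ≤ bdist D x} := by
  have heq : {x ∈ D | η ≤ bdist D x} = closure D ∩ {x | η ≤ bdist D x} := by
    refine Subset.antisymm (fun x hx => ⟨subset_closure hx.1, hx.2⟩) fun x ⟨hxD, hxη⟩ => ⟨?_, hxη⟩
    have hfr : x ∉ frontier D := fun h => (hη.trans_le hxη).ne' (infDist_zero_of_mem h)
    exact interior_subset (not_not.1 fun hi => hfr ⟨hxD, hi⟩)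
  rw [heq]
  exact hD.isCompact_closure.inter_right (isClosed_le continuous_const (continuous_bdist D))

variable [NormedSpace ℂ E]

theorem ball_bdist_subset (hx : x ∈ D) : ball x (bdist D x) ⊆ D := by
  intro y hy
  have hcover : ball x (bdist D x) ⊆ interior D ∪ (closure D)ᶜ := by
    intro z hz
    have hz' : z ∉ frontier D := fun h => (infDist_le_dist_of_mem h).not_gt (mem_ball'.1 hz)
    by_cases hzD : z ∈ closure D
    · exact .inl (not_not.1 fun hi => hz' ⟨hzD, hi⟩)
    · exact .inr hzD
  have hxδ : x ∈ ball x (bdist D x) := mem_ball_self (pos_of_mem_ball hy)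
  have hxi : x ∈ interior D := (hcover hxδ).resolve_right fun h => h (subset_closure hx)
  have hdisj : Disjoint (interior D) (closure D)ᶜ :=
    disjoint_compl_right_iff_subset.2 (interior_subset.trans subset_closure)
  exact interior_subset <| (convex_ball x (bdist D x)).isPreconnected.subset_left_of_subset_union
    isOpen_interior isClosed_closure.isOpen_compl hdisj hcover ⟨x, hxδ, hxi⟩ hy

theorem frontier_nonempty_of_isBounded [Nontrivial E] (hD : Bornology.IsBounded D)
    (hne : D.Nonempty) : (frontier D).Nonempty :=
  nonempty_frontier_iff.2 ⟨hne, fun h => NormedSpace.unbounded_univ ℂ E (h ▸ hD)⟩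

theorem frontier_inter_complexLine_nonempty (hD : Bornology.IsBounded D) (hx : x ∈ D)
    (hv : v ≠ 0) : (frontier D ∩ {w | ∃ c : ℂ, w = x + c • v}).Nonempty := by
  let φ : ℂ →ᵃ[ℂ] E := AffineMap.lineMap x (x + v)
  have hφ : AntilipschitzWith (nndist x (x + v))⁻¹ φ :=
    antilipschitzWith_lineMap (by simpa using hv)
  have hne : φ ⁻¹' D ≠ univ := fun h =>
    NormedSpace.unbounded_univ ℂ ℂ (h ▸ hφ.isBounded_preimage hD)
  obtain ⟨c, hc⟩ := nonempty_frontier_iff.2 ⟨⟨0, by simpa [φ] using hx⟩, hne⟩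
  exact ⟨φ c, AffineMap.lineMap_continuous.frontier_preimage_subset D hc, c,
    by simp [φ, AffineMap.lineMap_apply, add_comm]⟩

theorem mul_norm_le_bdistDir (hDo : IsOpen D) (hDb : Bornology.IsBounded D) (hx : x ∈ D)
    (hv : v ≠ 0) {ρ : ℝ} (hρ : ∀ c : ℂ, ‖c‖ < ρ → x + c • v ∈ D) : ρ * ‖v‖ ≤ bdistDir D x v := by
  refine (le_infDist (frontier_inter_complexLine_nonempty hDb hx hv)).2 ?_
  rintro _ ⟨hfr, c, rfl⟩
  have hc : ρ ≤ ‖c‖ := not_lt.1 fun h =>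
    (disjoint_frontier_iff_isOpen.2 hDo).le_bot ⟨hfr, hρ c h⟩
  rw [dist_self_add_right, norm_smul]
  gcongr

end BoundaryDistance

section HolomorphicDisc

variable {E : Type*} [NormedAddCommGroup E] [NormedSpace ℂ E]

theorem norm_deriv_le_of_re_lt {f : ℂ → ℂ} {c : ℂ} {R M : ℝ} (hR : 0 < R)
    (hf : DifferentiableOn ℂ f (ball c R)) (hM : ∀ z ∈ ball c R, (f z).re < M) :
    ‖deriv f c‖ ≤ 2 * (M - (f c).re) / R := by
  have hshift : MapsTo (fun z => c + z) (ball 0 R) (ball c R) := fun z hz => by simpa using hz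
  have hbound : ∀ z ∈ ball (0 : ℂ) R,
      ‖f (c + z) - f c‖ ≤ 2 * (M - (f c).re) * ‖z‖ / (R - ‖z‖) := fun z hz =>
    Complex.borelCaratheodory_zero (f := fun z => f (c + z) - f c)
      (sub_pos.2 (hM c (mem_ball_self hR)))
      ((hf.comp (by fun_prop) hshift).sub_const _)
      (fun z hz => by simpa using (hM _ (hshift hz)).le) hR hz (by simp)
  have hslope := (hf.differentiableAt (ball_mem_nhds c hR)).hasDerivAt.tendsto_slope_zero.norm
  have hlim : Tendsto (fun z : ℂ => 2 * (M - (f c).re) / (R - ‖z‖)) (𝓝[≠] 0)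
      (𝓝 (2 * (M - (f c).re) / R)) := by
    have : ContinuousAt (fun z : ℂ => 2 * (M - (f c).re) / (R - ‖z‖)) 0 :=
      continuousAt_const.div (by fun_prop) (by simpa using hR.ne')
    simpa using this.tendsto.mono_left nhdsWithin_le_nhds
  refine le_of_tendsto_of_tendsto hslope hlim ?_
  filter_upwards [self_mem_nhdsWithin, nhdsWithin_le_nhds (ball_mem_nhds (0 : ℂ) hR)] with z hz0 hz
  have hz0' : 0 < ‖z‖ := norm_pos_iff.2 hz0
  calc ‖z⁻¹ • (f (c + z) - f c)‖ = ‖z‖⁻¹ * ‖f (c + z) - f c‖ := by rw [norm_smul, norm_inv]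
    _ ≤ ‖z‖⁻¹ * (2 * (M - (f c).re) * ‖z‖ / (R - ‖z‖)) := by gcongr; exact hbound z hz
    _ = 2 * (M - (f c).re) / (R - ‖z‖) := by field_simp

theorem add_smul_deriv_mem_of_convex {D : Set E} (hDc : Convex ℝ D) (hDo : IsOpen D) {f : ℂ → E}
    {c w : ℂ} {R : ℝ} (hf : DifferentiableOn ℂ f (ball c R)) (hfD : MapsTo f (ball c R) D)
    (hw : ‖w‖ < R / 2) : f c + w • deriv f c ∈ D := by
  by_contra hp
  have hR : 0 < R := by linarith [norm_nonneg w]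
  obtain ⟨L, hL⟩ := RCLike.geometric_hahn_banach_open_point (𝕜 := ℂ) hDc hDo hp
  have hderiv : deriv (L ∘ f) c = L (deriv f c) :=
    (L.hasFDerivAt.comp_hasDerivAt c
      (hf.differentiableAt (ball_mem_nhds c hR)).hasDerivAt).deriv
  have hbound := norm_deriv_le_of_re_lt hR (L.differentiable.comp_differentiableOn hf)
    fun z hz => hL _ (hfD hz)
  have hpos := hL _ (hfD (mem_ball_self hR))
  have hle : (w * L (deriv f c)).re ≤ ‖w‖ * ‖L (deriv f c)‖ :=
    (Complex.re_le_norm _).trans_eq (norm_mul _ _)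
  rw [hderiv, le_div_iff₀ hR] at hbound
  simp only [map_add, map_smul, smul_eq_mul, Function.comp_apply, RCLike.re_eq_complex_re]
    at hbound hpos
  have hLpos : 0 < ‖L (deriv f c)‖ := pos_of_mul_pos_right (by linarith) (norm_nonneg w)
  nlinarith

theorem mapsTo_ball_div_of_mapsTo_closedBall {f : ℂ → E} {Ω D : Set E} {x : E} {r R : ℝ}
    (hr : 0 < r) (hrR : r ≤ R) (hΩR : Ω ⊆ closedBall x R) (hloc : Ω ∩ ball x r ⊆ D)
    (hf : DifferentiableOn ℂ f (ball 0 1)) (hfΩ : MapsTo f (ball 0 1) Ω) (hf0 : f 0 = x) :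
    MapsTo f (ball 0 (r / R)) D := by
  subst hf0
  have hR : 0 < R := hr.trans_le hrR
  intro z hz
  have hz1 : z ∈ ball (0 : ℂ) 1 := ball_subset_ball ((div_le_one hR).2 hrR) hz
  refine hloc ⟨hfΩ hz1, ?_⟩
  calc dist (f z) (f 0) ≤ R / 1 * dist z 0 :=
        Complex.dist_le_div_mul_dist_of_mapsTo_ball hf (fun y hy => hΩR (hfΩ hy)) hz1
    _ < R / 1 * (r / R) := by gcongr; exact hz
    _ = r := by field_simp

end HolomorphicDisc

section KobayashiMetric

variable {E : Type*} [NormedAddCommGroup E] [NormedSpace ℂ E] {D Ω : Set E} {x v : E}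
  {f : ℂ → E} {ζ : ℂ}

/-- `f` is a competitor in the definition of the Kobayashi metric `kobMetric D x v`: a holomorphic
disc in `D` centred at `x` whose differential at `0` sends the complex number `ζ` to `v`. -/
structure IsKobayashiDisc (D : Set E) (x v : E) (f : ℂ → E) (ζ : ℂ) : Prop where
  differentiableOn : DifferentiableOn ℂ f (ball 0 1)
  mapsTo : MapsTo f (ball 0 1) D
  map_zero : f 0 = x
  smul_deriv : ζ • deriv f 0 = v

theorem kobMetric_eq_sInf (D : Set E) (x v : E) :
    kobMetric D x v = sInf {r : ℝ | ∃ f ζ, IsKobayashiDisc D x v f ζ ∧ r = ‖ζ‖} := by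
  have hderiv (f : ℂ → E) : derivWithin f (ball 0 1) 0 = deriv f 0 :=
    derivWithin_of_mem_nhds (ball_mem_nhds 0 one_pos)
  unfold kobMetric
  congr 1
  ext r
  refine exists₂_congr fun f ζ => ?_
  rw [hderiv]
  exact ⟨fun ⟨h₁, h₂, h₃, h₄, h₅⟩ => ⟨⟨h₁, h₂, h₃, h₄⟩, h₅⟩,
    fun ⟨⟨h₁, h₂, h₃, h₄⟩, h₅⟩ => ⟨h₁, h₂, h₃, h₄, h₅⟩⟩

theorem kobMetric_nonneg (D : Set E) (x v : E) : 0 ≤ kobMetric D x v := by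
  rw [kobMetric_eq_sInf]
  exact Real.sInf_nonneg (by rintro _ ⟨f, ζ, -, rfl⟩; exact norm_nonneg ζ)

theorem IsKobayashiDisc.kobMetric_le (h : IsKobayashiDisc D x v f ζ) : kobMetric D x v ≤ ‖ζ‖ := by
  rw [kobMetric_eq_sInf]
  exact csInf_le ⟨0, by rintro _ ⟨f, ζ, -, rfl⟩; exact norm_nonneg ζ⟩ ⟨f, ζ, h, rfl⟩

theorem le_mul_kobMetric {A B : ℝ} (hA : 0 ≤ A) (hex : ∃ f ζ, IsKobayashiDisc D x v f ζ)
    (h : ∀ f ζ, IsKobayashiDisc D x v f ζ → B ≤ A * ‖ζ‖) : B ≤ A * kobMetric D x v := by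
  obtain ⟨f, ζ, hf⟩ := hex
  rcases hA.eq_or_lt with rfl | hA
  · simpa using h f ζ hf
  rw [← div_le_iff₀' hA, kobMetric_eq_sInf]
  refine le_csInf ⟨_, f, ζ, hf, rfl⟩ ?_
  rintro _ ⟨f, ζ, hf, rfl⟩
  exact (div_le_iff₀' hA).2 (h f ζ hf)

theorem isKobayashiDisc_affine (v : E) {r : ℝ} (hr : 0 < r) (hball : ball x r ⊆ D) :
    IsKobayashiDisc D x v (fun z => x + z • (r / ‖v‖ : ℝ) • v) (‖v‖ / r : ℝ) where
  differentiableOn := by fun_prop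
  mapsTo z hz := by
    have hv : ‖(r / ‖v‖) • v‖ ≤ r := by
      rw [norm_smul, Real.norm_of_nonneg (by positivity)]
      exact (div_mul_eq_mul_div r _ _).trans_le (div_le_of_le_mul₀ (norm_nonneg v) hr.le le_rfl)
    apply hball
    rw [mem_ball_zero_iff] at hz
    rw [mem_ball_iff_norm, add_sub_cancel_left, norm_smul]
    nlinarith [norm_nonneg z]
  map_zero := by simp
  smul_deriv := by
    have hd : HasDerivAt (fun z : ℂ => x + z • (r / ‖v‖) • v) ((1 : ℂ) • (r / ‖v‖) • v) 0 :=
      ((hasDerivAt_id 0).smul_const _).const_add x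
    rcases eq_or_ne v 0 with rfl | hv
    · simp
    rw [hd.deriv, one_smul, Complex.coe_smul, smul_smul,
      div_mul_div_cancel₀ hr.ne', div_self (norm_ne_zero_iff.2 hv), one_smul]

theorem kobMetric_le_norm_div (v : E) {r : ℝ} (hr : 0 < r) (hball : ball x r ⊆ D) :
    kobMetric D x v ≤ ‖v‖ / r := by
  refine (isKobayashiDisc_affine v hr hball).kobMetric_le.trans_eq ?_
  rw [Complex.norm_real, Real.norm_of_nonneg (by positivity)]

theorem IsKobayashiDisc.mul_norm_le_bdistDir_mul_norm (h : IsKobayashiDisc Ω x v f ζ)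
    (hDo : IsOpen D) (hDc : Convex ℝ D) (hDb : Bornology.IsBounded D) (hv : v ≠ 0) {s : ℝ}
    (hs : 0 < s) (hs1 : s ≤ 1) (hfD : MapsTo f (ball 0 s) D) :
    s * ‖v‖ ≤ 2 * bdistDir D x v * ‖ζ‖ := by
  obtain ⟨hf, -, rfl, hderiv⟩ := h
  have hζ : 0 < ‖ζ‖ := norm_pos_iff.2 fun h0 => hv (by rw [← hderiv, h0, zero_smul])
  have hlin : ∀ c : ℂ, ‖c‖ < s / 2 / ‖ζ‖ → f 0 + c • v ∈ D := by
    intro c hc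
    rw [lt_div_iff₀ hζ, ← norm_mul] at hc
    rw [← hderiv, smul_smul]
    exact add_smul_deriv_mem_of_convex hDc hDo (hf.mono (ball_subset_ball hs1)) hfD hc
  have hle := mul_norm_le_bdistDir hDo hDb (hfD (mem_ball_self hs)) hv hlin
  rw [div_mul_eq_mul_div, div_le_iff₀ hζ] at hle
  linarith

theorem mul_norm_le_bdistDir_mul_kobMetric (hDo : IsOpen D) (hDc : Convex ℝ D)
    (hDb : Bornology.IsBounded D) (hDΩ : D ⊆ Ω) {r R : ℝ} (hr : 0 < r) (hrR : r ≤ R)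
    (hΩR : Ω ⊆ closedBall x R) (hloc : Ω ∩ ball x r ⊆ D) (hx : x ∈ D) (hv : v ≠ 0) :
    r * ‖v‖ ≤ 2 * R * bdistDir D x v * kobMetric Ω x v := by
  have hR : 0 < R := hr.trans_le hrR
  obtain ⟨ρ, hρ, hρD⟩ := Metric.isOpen_iff.1 hDo x hx
  refine le_mul_kobMetric (mul_nonneg (by positivity) infDist_nonneg)
    ⟨_, _, isKobayashiDisc_affine v hρ (hρD.trans hDΩ)⟩ fun f ζ h => ?_
  have hfD : MapsTo f (ball 0 (r / R)) D := mapsTo_ball_div_of_mapsTo_closedBall hr hrR hΩR hloc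
    h.differentiableOn h.mapsTo h.map_zero
  have hle := h.mul_norm_le_bdistDir_mul_norm hDo hDc hDb hv (div_pos hr hR)
    ((div_le_one hR).2 hrR) hfD
  rw [div_mul_eq_mul_div, div_le_iff₀ hR] at hle
  linarith

end KobayashiMetric

section QuadraticBezier

variable {F : Type*} [AddCommGroup F] [Module ℝ F]

/-- The quadratic Bézier curve with control points `x`, `o`, `y`, by de Casteljau's construction.
The arc from `x` to `y` pulled towards `o` serves as a test curve for the Kobayashi distance; a
single smooth arc avoids concatenating curves. -/
def quadraticBezier (x o y : F) (t : ℝ) : F :=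
  AffineMap.lineMap (AffineMap.lineMap x o t) (AffineMap.lineMap o y t) t

theorem quadraticBezier_eq (x o y : F) (t : ℝ) :
    quadraticBezier x o y t = (1 - t) ^ 2 • x + (2 * t * (1 - t)) • o + t ^ 2 • y := by
  simp only [quadraticBezier, AffineMap.lineMap_apply_module]
  module

theorem quadraticBezier_one_sub (x o y : F) (t : ℝ) :
    quadraticBezier x o y (1 - t) = quadraticBezier y o x t := by
  simp only [quadraticBezier_eq]
  module

theorem lineMap_pos {a b t : ℝ} (ha : 0 < a) (hb : 0 < b) (ht : t ∈ Icc (0 : ℝ) 1) :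
    0 < AffineMap.lineMap a b t :=
  (convex_Ioi (0 : ℝ)).lineMap_mem (mem_Ioi.2 ha) (mem_Ioi.2 hb) ht

theorem quadraticBezier_pos {d ρ e t : ℝ} (hd : 0 < d) (hρ : 0 < ρ) (he : 0 < e)
    (ht : t ∈ Icc (0 : ℝ) 1) : 0 < quadraticBezier d ρ e t :=
  lineMap_pos (lineMap_pos hd hρ ht) (lineMap_pos hρ he ht) ht

theorem mul_add_le_quadraticBezier {ρ d e t : ℝ} (hρ : 0 ≤ ρ) (hρ' : ρ ≤ 1 / 4) (hd : 0 ≤ d)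
    (he : 0 ≤ e) (ht : 0 ≤ t) (ht' : t ≤ 1 / 2) : ρ * (d + t) ≤ quadraticBezier d ρ e t := by
  have hd' : ρ * d ≤ (1 - t) ^ 2 * d := by gcongr; nlinarith
  have ht'' : ρ * t ≤ 2 * t * (1 - t) * ρ := by nlinarith [mul_nonneg hρ ht]
  have he' : 0 ≤ t ^ 2 * e := by positivity
  simp only [quadraticBezier_eq, smul_eq_mul]
  linarith

theorem inv_quadraticBezier_le {ρ d e t : ℝ} (hρ : 0 < ρ) (hρ' : ρ ≤ 1 / 4) (hd : 0 < d)
    (he : 0 < e) (ht : t ∈ Icc (0 : ℝ) 1) :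
    (quadraticBezier d ρ e t)⁻¹ ≤ ρ⁻¹ * ((d + t)⁻¹ + (e + (1 - t))⁻¹) := by
  have hdt : 0 < d + t := by linarith [ht.1]
  have het : 0 < e + (1 - t) := by linarith [ht.2]
  rw [mul_add, ← mul_inv, ← mul_inv]
  rcases le_total t (1 / 2) with h | h
  · have hle : ρ * (d + t) ≤ quadraticBezier d ρ e t :=
      mul_add_le_quadraticBezier hρ.le hρ' hd.le he.le ht.1 h
    exact (inv_anti₀ (by positivity) hle).trans (le_add_of_nonneg_right (by positivity))
  · have hle : ρ * (e + (1 - t)) ≤ quadraticBezier d ρ e t := by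
      rw [← sub_sub_cancel 1 t, quadraticBezier_one_sub, sub_sub_cancel]
      exact mul_add_le_quadraticBezier hρ.le hρ' he.le hd.le (by linarith [ht.2]) (by linarith)
    exact (inv_anti₀ (by positivity) hle).trans (le_add_of_nonneg_left (by positivity))

variable {E : Type*} [NormedAddCommGroup E] [NormedSpace ℝ E]

theorem hasDerivAt_quadraticBezier (x o y : E) (t : ℝ) :
    HasDerivAt (quadraticBezier x o y) ((2 : ℝ) • AffineMap.lineMap (o - x) (y - o) t) t := by
  have h₀ : HasDerivAt (fun t : ℝ => (1 - t) ^ 2) (-(2 * (1 - t))) t :=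
    (((hasDerivAt_id t).const_sub 1).pow 2).congr_deriv (by simp)
  have h₁ : HasDerivAt (fun t : ℝ => 2 * t * (1 - t)) (2 - 4 * t) t :=
    (((hasDerivAt_id t).const_mul 2).mul ((hasDerivAt_id t).const_sub 1)).congr_deriv
      (by simp only [id_eq]; ring)
  have h₂ : HasDerivAt (fun t : ℝ => t ^ 2) (2 * t) t :=
    ((hasDerivAt_id t).pow 2).congr_deriv (by simp)
  rw [funext (quadraticBezier_eq x o y)]
  refine (((h₀.smul_const x).add (h₁.smul_const o)).add (h₂.smul_const y)).congr_deriv ?_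
  rw [AffineMap.lineMap_apply_module]
  module

theorem norm_lineMap_le {u v : E} {M t : ℝ} (hu : ‖u‖ ≤ M) (hv : ‖v‖ ≤ M)
    (ht : t ∈ Icc (0 : ℝ) 1) : ‖AffineMap.lineMap (k := ℝ) u v t‖ ≤ M :=
  mem_closedBall_zero_iff.1 <| (convex_closedBall (0 : E) M).lineMap_mem
    (mem_closedBall_zero_iff.2 hu) (mem_closedBall_zero_iff.2 hv) ht

theorem ball_lineMap_subset {D : Set E} (hD : Convex ℝ D) {x y : E} {r s t : ℝ} (hr : 0 < r)
    (hs : 0 < s) (hx : ball x r ⊆ D) (hy : ball y s ⊆ D) (ht : t ∈ Icc (0 : ℝ) 1) :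
    ball (AffineMap.lineMap x y t) (AffineMap.lineMap r s t) ⊆ D := by
  intro p hp
  set c : E := AffineMap.lineMap x y t
  set R : ℝ := AffineMap.lineMap r s t
  have hR : 0 < R := pos_of_mem_ball hp
  have hu : ‖R⁻¹ • (p - c)‖ < 1 := by
    rw [norm_smul, norm_inv, Real.norm_of_nonneg hR.le, inv_mul_lt_one₀ hR, ← mem_ball_iff_norm]
    exact hp
  have hmem {z : E} {q : ℝ} (hq : 0 < q) (hz : ball z q ⊆ D) : z + q • R⁻¹ • (p - c) ∈ D := by
    refine hz ?_
    rw [mem_ball_iff_norm, add_sub_cancel_left, norm_smul, Real.norm_of_nonneg hq.le]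
    exact mul_lt_of_lt_one_right hq hu
  have hp' : p = c + R • R⁻¹ • (p - c) := by
    rw [smul_inv_smul₀ hR.ne', add_sub_cancel]
  rw [hp']
  convert hD.lineMap_mem (hmem hr hx) (hmem hs hy) ht using 1
  simp only [c, R, AffineMap.lineMap_apply_module, smul_eq_mul]
  module

theorem ball_quadraticBezier_subset {D : Set E} (hD : Convex ℝ D) {x o y : E} {dx ρ dy t : ℝ}
    (hdx : 0 < dx) (hρ : 0 < ρ) (hdy : 0 < dy) (hx : ball x dx ⊆ D) (ho : ball o ρ ⊆ D)
    (hy : ball y dy ⊆ D) (ht : t ∈ Icc (0 : ℝ) 1) :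
    ball (quadraticBezier x o y t) (quadraticBezier dx ρ dy t) ⊆ D :=
  ball_lineMap_subset hD (lineMap_pos hdx hρ ht) (lineMap_pos hρ hdy ht)
    (ball_lineMap_subset hD hdx hρ hx ho ht)
    (ball_lineMap_subset hD hρ hdy ho hy ht) ht

end QuadraticBezier

section KobayashiDistance

variable {E : Type*} [NormedAddCommGroup E] [NormedSpace ℂ E] {D Ω : Set E} {σ g : ℝ → E}
  {a b : ℝ}

theorem isACWithDeriv_of_hasDerivAt [CompleteSpace E] (hσ : ∀ t, HasDerivAt σ (g t) t)
    (hg : Continuous g) : IsACWithDeriv σ g a b := by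
  refine ⟨hg.intervalIntegrable a b, fun t _ => ?_⟩
  rw [intervalIntegral.integral_eq_sub_of_hasDerivAt (fun s _ => hσ s) (hg.intervalIntegrable a t),
    add_sub_cancel]

theorem kobDist_le_integral_of_kobMetric_le (hab : a ≤ b) (hσ : IsACWithDeriv σ g a b)
    (hσD : MapsTo σ (Icc a b) D) {φ : ℝ → ℝ} (hφ : IntervalIntegrable φ volume a b)
    (hle : ∀ t ∈ Icc a b, kobMetric D (σ t) (g t) ≤ φ t) :
    kobDist D (σ a) (σ b) ≤ ∫ t in a..b, φ t := by
  have hlength : kobDist D (σ a) (σ b) ≤ ∫ t in a..b, kobMetric D (σ t) (g t) := by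
    refine csInf_le ⟨0, ?_⟩ ⟨a, b, σ, g, hab, hσ, hσD, rfl, rfl, rfl⟩
    rintro _ ⟨a, b, σ, g, hab, -, -, -, -, rfl⟩
    exact intervalIntegral.integral_nonneg hab fun t _ => kobMetric_nonneg D (σ t) (g t)
  refine hlength.trans ?_
  rw [intervalIntegral.integral_of_le hab, intervalIntegral.integral_of_le hab]
  refine integral_mono_of_nonneg (.of_forall fun t => kobMetric_nonneg D (σ t) (g t)) hφ.1 ?_
  exact (ae_restrict_iff' measurableSet_Ioc).2
    (.of_forall fun t ht => hle t (Ioc_subset_Icc_self ht))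

theorem intervalIntegrable_inv_add {d : ℝ} (hd : 0 < d) :
    IntervalIntegrable (fun t : ℝ => (d + t)⁻¹) volume 0 1 := by
  refine ContinuousOn.intervalIntegrable fun t ht => ContinuousAt.continuousWithinAt ?_
  rw [uIcc_of_le zero_le_one] at ht
  exact (continuousAt_const.add continuousAt_id).inv₀ (add_pos_of_pos_of_nonneg hd ht.1).ne'

theorem integral_inv_add {d : ℝ} (hd : 0 < d) :
    ∫ t in (0 : ℝ)..1, (d + t)⁻¹ = Real.log (1 + d⁻¹) := by
  rw [intervalIntegral.integral_comp_add_left (fun t => t⁻¹), add_zero,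
    integral_inv_of_pos hd (by linarith), add_div, div_self hd.ne', one_div]

theorem kobDist_le_log [CompleteSpace E] (hDc : Convex ℝ D) (hDΩ : D ⊆ Ω) {o x y : E}
    {ρ M dx dy : ℝ} (hρ : 0 < ρ) (hρ' : ρ ≤ 1 / 4) (ho : ball o ρ ⊆ D) (hDM : D ⊆ closedBall o M)
    (hdx : 0 < dx) (hdy : 0 < dy) (hx : ball x dx ⊆ D) (hy : ball y dy ⊆ D) :
    kobDist Ω x y ≤ 2 * M / ρ * (Real.log (1 + dx⁻¹) + Real.log (1 + dy⁻¹)) := by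
  set g : ℝ → E := fun t => (2 : ℝ) • AffineMap.lineMap (o - x) (y - o) t
  have hM : 0 ≤ M := nonempty_closedBall.1 ⟨o, hDM (ho (mem_ball_self hρ))⟩
  have hg : ∀ t ∈ Icc (0 : ℝ) 1, ‖g t‖ ≤ 2 * M := by
    intro t ht
    have hxM : ‖o - x‖ ≤ M := mem_closedBall_iff_norm'.1 (hDM (hx (mem_ball_self hdx)))
    have hyM : ‖y - o‖ ≤ M := mem_closedBall_iff_norm.1 (hDM (hy (mem_ball_self hdy)))
    rw [norm_smul, Real.norm_ofNat]
    gcongr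
    exact norm_lineMap_le hxM hyM ht
  have hpos : ∀ t ∈ Icc (0 : ℝ) 1, 0 < quadraticBezier dx ρ dy t := fun t =>
    quadraticBezier_pos hdx hρ hdy
  have hball : ∀ t ∈ Icc (0 : ℝ) 1,
      ball (quadraticBezier x o y t) (quadraticBezier dx ρ dy t) ⊆ Ω := fun t ht =>
    (ball_quadraticBezier_subset hDc hdx hρ hdy hx ho hy ht).trans hDΩ
  have hkob : ∀ t ∈ Icc (0 : ℝ) 1, kobMetric Ω (quadraticBezier x o y t) (g t) ≤
      2 * M / ρ * ((dx + t)⁻¹ + (dy + (1 - t))⁻¹) := fun t ht => calc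
    _ ≤ ‖g t‖ * (quadraticBezier dx ρ dy t)⁻¹ :=
      kobMetric_le_norm_div (g t) (hpos t ht) (hball t ht)
    _ ≤ 2 * M * (ρ⁻¹ * ((dx + t)⁻¹ + (dy + (1 - t))⁻¹)) :=
      mul_le_mul (hg t ht) (inv_quadraticBezier_le hρ hρ' hdx hdy ht)
        (inv_nonneg.2 (hpos t ht).le) (by positivity)
    _ = _ := by ring
  have hix := intervalIntegrable_inv_add hdx
  have hiy : IntervalIntegrable (fun t : ℝ => (dy + (1 - t))⁻¹) volume 0 1 := by
    simpa using ((intervalIntegrable_inv_add hdy).comp_sub_left 1).symm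
  have hle := kobDist_le_integral_of_kobMetric_le zero_le_one
    (isACWithDeriv_of_hasDerivAt (hasDerivAt_quadraticBezier x o y) (by fun_prop))
    (fun t ht => hball t ht (mem_ball_self (hpos t ht))) ((hix.add hiy).const_mul (2 * M / ρ)) hkob
  rw [intervalIntegral.integral_const_mul, intervalIntegral.integral_add hix hiy,
    intervalIntegral.integral_comp_sub_left (fun t => (dy + t)⁻¹), sub_self, sub_zero,
    integral_inv_add hdx, integral_inv_add hdy] at hle
  simpa [quadraticBezier] using hle

theorem exists_kobDist_le_log [CompleteSpace E] (hDo : IsOpen D) (hDc : Convex ℝ D)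
    (hDb : Bornology.IsBounded D) (hne : D.Nonempty) (hfr : (frontier D).Nonempty) (hDΩ : D ⊆ Ω) :
    ∃ α ≥ 0, ∀ x ∈ D, ∀ y ∈ D, kobDist Ω x y ≤
      α * (Real.log (1 + (bdist D x)⁻¹) + Real.log (1 + (bdist D y)⁻¹)) := by
  obtain ⟨o, ho⟩ := hne
  obtain ⟨ρ, hρ, hρD⟩ := Metric.isOpen_iff.1 hDo o ho
  obtain ⟨M, hM, hDM⟩ := hDb.subset_closedBall_lt 0 o
  refine ⟨2 * M / min ρ (1 / 4), by positivity, fun x hx y hy => ?_⟩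
  exact kobDist_le_log hDc hDΩ (by positivity) (min_le_right _ _)
    ((ball_subset_ball (min_le_left _ _)).trans hρD) hDM (bdist_pos hDo hfr hx)
    (bdist_pos hDo hfr hy) (ball_bdist_subset hx) (ball_bdist_subset hy)

theorem log_one_add_inv_le {d : ℝ} (hd : 0 < d) (hd' : d ≤ Real.exp (-1)) :
    Real.log (1 + d⁻¹) ≤ 2 * -Real.log d := by
  have hinv : (2 : ℝ) ≤ d⁻¹ := by
    have h := inv_anti₀ hd hd'
    rw [← Real.exp_neg, neg_neg] at h
    linarith [Real.add_one_le_exp 1]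
  calc Real.log (1 + d⁻¹) ≤ Real.log (d⁻¹ ^ 2) := Real.log_le_log (by positivity) (by nlinarith)
    _ = 2 * -Real.log d := by rw [Real.log_pow, Real.log_inv, Nat.cast_ofNat]

end KobayashiDistance

section PowerIntegral

variable {N ν : ℝ}

theorem continuous_add_abs_sub_rpow (hN : 0 < N) (c p : ℝ) :
    Continuous fun t : ℝ => (N + |t - c|) ^ p :=
  Continuous.rpow_const (by fun_prop)
    fun t => .inl (add_pos_of_pos_of_nonneg hN (abs_nonneg (t - c))).ne'

theorem integral_add_abs_rpow_neg_le (hN : 0 < N) (hν : 0 < ν) {L : ℝ} (hL : 0 ≤ L) :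
    ∫ u in (0 : ℝ)..L, (N + |u|) ^ (-(1 + ν)) ≤ N ^ (-ν) / ν := by
  have habs : ∫ u in (0 : ℝ)..L, (N + |u|) ^ (-(1 + ν)) =
      ∫ u in (0 : ℝ)..L, (N + u) ^ (-(1 + ν)) := by
    refine intervalIntegral.integral_congr fun u hu => ?_
    rw [uIcc_of_le hL] at hu
    simp only [abs_of_nonneg hu.1]
  have hzero : (0 : ℝ) ∉ uIcc N (N + L) := by
    rw [uIcc_of_le (by linarith)]
    exact fun h => hN.not_ge h.1
  rw [habs, intervalIntegral.integral_comp_add_left (fun u => u ^ (-(1 + ν))), add_zero,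
    integral_rpow (.inr ⟨by linarith, hzero⟩), show -(1 + ν) + 1 = -ν by ring, div_neg, ← neg_div,
    neg_sub]
  gcongr
  exact sub_le_self _ (Real.rpow_nonneg (by linarith) _)

theorem integral_add_abs_sub_rpow_neg_le (hN : 0 < N) (hν : 0 < ν) {a b c : ℝ}
    (hc : c ∈ Icc a b) : ∫ t in a..b, (N + |t - c|) ^ (-(1 + ν)) ≤ 2 * (N ^ (-ν) / ν) := by
  have hint (p q : ℝ) : IntervalIntegrable (fun t => (N + |t - c|) ^ (-(1 + ν))) volume p q :=
    (continuous_add_abs_sub_rpow hN c _).intervalIntegrable p q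
  have hleft : ∫ t in a..c, (N + |t - c|) ^ (-(1 + ν)) ≤ N ^ (-ν) / ν := by
    have h := intervalIntegral.integral_comp_sub_left (a := a) (b := c)
      (fun u => (N + |u|) ^ (-(1 + ν))) c
    simp only [abs_sub_comm c, sub_self] at h
    exact h.trans_le (integral_add_abs_rpow_neg_le hN hν (sub_nonneg.2 hc.1))
  have hright : ∫ t in c..b, (N + |t - c|) ^ (-(1 + ν)) ≤ N ^ (-ν) / ν := by
    rw [intervalIntegral.integral_comp_sub_right (fun u => (N + |u|) ^ (-(1 + ν))), sub_self]
    exact integral_add_abs_rpow_neg_le hN hν (sub_nonneg.2 hc.2)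
  rw [← intervalIntegral.integral_add_adjacent_intervals (hint a c) (hint c b)]
  linarith

theorem div_rpow_le_mul_rpow_neg {C β l p τ : ℝ} (hC : 0 ≤ C) (hβ : 0 < β) (hp : 0 ≤ p)
    (hτ : 0 < τ) (hle : τ ≤ β * l) : C / l ^ p ≤ C * β ^ p * τ ^ (-p) := by
  calc C / l ^ p ≤ C / (τ / β) ^ p := by
        have : τ / β ≤ l := (div_le_iff₀' hβ).2 hle
        gcongr
    _ = C * β ^ p * τ ^ (-p) := by
        rw [Real.div_rpow hτ.le hβ.le, Real.rpow_neg hτ.le, div_div_eq_mul_div, div_eq_mul_inv]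

end PowerIntegral

section Curves

variable {E : Type*} [NormedAddCommGroup E] [NormedSpace ℂ E] {σ g : ℝ → E} {a b : ℝ}

theorem IsACWithDeriv.continuousOn (hσ : IsACWithDeriv σ g a b) (hab : a ≤ b) :
    ContinuousOn σ (Icc a b) := by
  have hint := intervalIntegral.continuousOn_primitive_interval' hσ.1 left_mem_uIcc
  rw [uIcc_of_le hab] at hint
  exact (continuousOn_const.add hint).congr hσ.2

theorem IsACWithDeriv.norm_sub_le_of_norm_deriv_le (hσ : IsACWithDeriv σ g a b) {K N ν t₀ : ℝ}
    (hK : 0 ≤ K) (hN : 0 < N) (hν : 0 < ν) (ht₀ : t₀ ∈ Icc a b)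
    (hg : ∀ᵐ t, t ∈ Icc a b → ‖g t‖ ≤ K * (N + |t - t₀|) ^ (-(1 + ν))) :
    ‖σ b - σ a‖ ≤ K * (2 * (N ^ (-ν) / ν)) := by
  have hab : a ≤ b := ht₀.1.trans ht₀.2
  rw [hσ.2 b (right_mem_Icc.2 hab), add_sub_cancel_left]
  calc ‖∫ t in a..b, g t‖ ≤ ∫ t in a..b, K * (N + |t - t₀|) ^ (-(1 + ν)) :=
        intervalIntegral.norm_integral_le_of_norm_le hab
          (hg.mono fun t ht htab => ht (Ioc_subset_Icc_self htab))
          ((continuous_add_abs_sub_rpow hN t₀ _).const_mul K |>.intervalIntegrable a b)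
    _ = K * ∫ t in a..b, (N + |t - t₀|) ^ (-(1 + ν)) := intervalIntegral.integral_const_mul _ _
    _ ≤ K * (2 * (N ^ (-ν) / ν)) := by
        gcongr
        exact integral_add_abs_sub_rpow_neg_le hN hν ht₀

theorem AlmostGeodesicOn.mono_right {Ω : Set E} {lam κ c : ℝ}
    (hσ : AlmostGeodesicOn Ω lam κ σ g a b) (hc : c ∈ Icc a b) :
    AlmostGeodesicOn Ω lam κ σ g a c := by
  obtain ⟨hmaps, ⟨hint, hftc⟩, hdist, hspeed⟩ := hσ
  have hsub : Icc a c ⊆ Icc a b := Icc_subset_Icc_right hc.2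
  exact ⟨hmaps.mono_left hsub,
    ⟨hint.mono_set (uIcc_subset_uIcc_left (Icc_subset_uIcc hc)), fun t ht => hftc t (hsub ht)⟩,
    fun s hs t ht => hdist s (hsub hs) t (hsub ht),
    hspeed.mono fun t h ht => h (hsub ht)⟩

theorem exists_first_eq {f : ℝ → ℝ} {r : ℝ} (hab : a ≤ b) (hf : ContinuousOn f (Icc a b))
    (ha : f a ≤ r) (hb : r ≤ f b) : ∃ t ∈ Icc a b, f t = r ∧ ∀ s ∈ Icc a t, f s ≤ r := by
  have hcompact : IsCompact (Icc a b ∩ f ⁻¹' {r}) :=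
    isCompact_Icc.of_isClosed_subset
      (hf.preimage_isClosed_of_isClosed isClosed_Icc isClosed_singleton) inter_subset_left
  obtain ⟨t, ⟨ht, htr⟩, hmin⟩ := hcompact.exists_isLeast (intermediate_value_Icc hab hf ⟨ha, hb⟩)
  refine ⟨t, ht, htr, fun s hs => le_of_not_gt fun hrs => ?_⟩
  have hsb : Icc a s ⊆ Icc a b := Icc_subset_Icc_right (hs.2.trans ht.2)
  obtain ⟨u, hu, hur⟩ := intermediate_value_Icc hs.1 (hf.mono hsb) ⟨ha, hrs.le⟩
  have hus : u = s := le_antisymm hu.2 (hs.2.trans (hmin ⟨hsb hu, hur⟩))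
  exact hrs.ne' (hus ▸ hur)

end Curves

section Visibility

variable {E : Type*} [NormedAddCommGroup E] [NormedSpace ℂ E] {D Ω : Set E} {σ g : ℝ → E}
  {lam κ : ℝ}

theorem LogTypeConvexWith.exists_norm_le_of_kobMetric_le {C ν : ℝ}
    (hD : LogTypeConvexWith D C ν) (hΩb : Bornology.IsBounded Ω) (hDΩ : D ⊆ Ω) {ξ : E} {r β : ℝ}
    (hr : 0 < r) (hloc : Ω ∩ ball ξ (2 * r) ⊆ D) (hlam : 0 ≤ lam) (hβ : 0 < β) :
    ∃ K ≥ 0, ∀ x ∈ D ∩ closedBall ξ r, ∀ (v : E) (τ : ℝ), 0 < τ →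
      τ ≤ β * -Real.log (bdist D x) → kobMetric Ω x v ≤ lam → ‖v‖ ≤ K * τ ^ (-(1 + ν)) := by
  obtain ⟨hDo, -, hDb, hDc, hC, hν, hlog⟩ := hD
  set R := max (diam Ω) r
  refine ⟨2 * R * (C * β ^ (1 + ν)) * lam / r, by positivity, ?_⟩
  rintro x ⟨hxD, hxξ⟩ v τ hτ hτl hspeed
  rcases eq_or_ne v 0 with rfl | hv
  · rw [norm_zero]; positivity
  have hl : 0 < -Real.log (bdist D x) := pos_of_mul_pos_right (hτ.trans_le hτl) hβ.le
  have hΩR : Ω ⊆ closedBall x R := fun y hy =>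
    (dist_le_diam_of_mem hΩb hy (hDΩ hxD)).trans (le_max_left _ _)
  have hball : Ω ∩ ball x r ⊆ D := (inter_subset_inter_right Ω
    (ball_subset_ball' (by linarith [mem_closedBall.1 hxξ]))).trans hloc
  have hdir : bdistDir D x v ≤ C * β ^ (1 + ν) * τ ^ (-(1 + ν)) := by
    refine (hlog x hxD v hv).trans ?_
    rw [abs_of_neg (neg_pos.1 hl)]
    exact div_rpow_le_mul_rpow_neg hC.le hβ (by linarith) hτ hτl
  rw [div_mul_eq_mul_div, le_div_iff₀' hr]
  calc r * ‖v‖ ≤ 2 * R * bdistDir D x v * kobMetric Ω x v :=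
        mul_norm_le_bdistDir_mul_kobMetric hDo hDc hDb hDΩ hr (le_max_right _ _) hΩR hball hxD hv
    _ ≤ 2 * R * (C * β ^ (1 + ν) * τ ^ (-(1 + ν))) * lam := by
        gcongr
        exact kobMetric_nonneg Ω x v
    _ = _ := by ring

theorem AlmostGeodesicOn.add_abs_sub_le {a b : ℝ} (hσ : AlmostGeodesicOn Ω lam κ σ g a b)
    (hlam : 0 < lam) (hσD : MapsTo σ (Icc a b) D) {α N : ℝ} (hα : 0 ≤ α)
    (hdist : ∀ x ∈ D, ∀ y ∈ D, kobDist Ω x y ≤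
      α * (Real.log (1 + (bdist D x)⁻¹) + Real.log (1 + (bdist D y)⁻¹)))
    (hN : 1 ≤ N) (hκ : κ ≤ N) (hpos : ∀ t ∈ Icc a b, 0 < bdist D (σ t))
    (hnear : ∀ t ∈ Icc a b, bdist D (σ t) ≤ Real.exp (-N)) {t₀ t : ℝ} (ht₀ : t₀ ∈ Icc a b)
    (hmax : IsMaxOn (bdist D ∘ σ) (Icc a b) t₀) (ht : t ∈ Icc a b) :
    N + |t - t₀| ≤ (1 + lam * (1 + 4 * α)) * -Real.log (bdist D (σ t)) := by
  have hlog : ∀ s ∈ Icc a b,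
      Real.log (1 + (bdist D (σ s))⁻¹) ≤ 2 * -Real.log (bdist D (σ s)) := fun s hs =>
    log_one_add_inv_le (hpos s hs)
      ((hnear s hs).trans (Real.exp_le_exp.2 (neg_le_neg hN)))
  have hNl : N ≤ -Real.log (bdist D (σ t)) :=
    le_neg_of_le_neg ((Real.log_le_iff_le_exp (hpos t ht)).2 (hnear t ht))
  have hl₀ : -Real.log (bdist D (σ t₀)) ≤ -Real.log (bdist D (σ t)) :=
    neg_le_neg (Real.log_le_log (hpos t ht) (hmax ht))
  have hkob : kobDist Ω (σ t₀) (σ t) ≤ α * (4 * -Real.log (bdist D (σ t))) :=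
    (hdist _ (hσD ht₀) _ (hσD ht)).trans <| mul_le_mul_of_nonneg_left
      (by linarith [hlog t₀ ht₀, hlog t ht]) hα
  have htime : |t - t₀| ≤ lam * (kobDist Ω (σ t₀) (σ t) + κ) := by
    rw [← div_le_iff₀' hlam, ← one_div_mul_eq_div]
    linarith [(hσ.2.2.1 t₀ ht₀ t ht).1]
  calc N + |t - t₀| ≤ -Real.log (bdist D (σ t)) + lam * (α * (4 * -Real.log (bdist D (σ t))) +
        -Real.log (bdist D (σ t))) := by
        refine add_le_add hNl (htime.trans ?_)
        gcongr
        exact hκ.trans hNl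
    _ = _ := by ring

theorem LogTypeConvex.exists_dist_lt_of_bdist_lt [CompleteSpace E] [Nontrivial E]
    (hD : LogTypeConvex D) (hΩb : Bornology.IsBounded Ω) (hDΩ : D ⊆ Ω) {ξ : E} {r ε : ℝ}
    (hr : 0 < r) (hloc : Ω ∩ ball ξ (2 * r) ⊆ D) (hlam : 0 < lam) (κ : ℝ) (hε : 0 < ε) :
    ∃ η > 0, ∀ (σ g : ℝ → E) (a b : ℝ), a ≤ b → AlmostGeodesicOn Ω lam κ σ g a b →
      MapsTo σ (Icc a b) (closedBall ξ r) → (∀ t ∈ Icc a b, bdist D (σ t) < η) →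
      dist (σ a) (σ b) < ε := by
  obtain ⟨C, ν, hCν⟩ := hD
  obtain ⟨hDo, hDne, hDb, hDc, -, hν, -⟩ := id hCν
  have hfr := frontier_nonempty_of_isBounded hDb hDne
  obtain ⟨α, hα, hdist⟩ := exists_kobDist_le_log hDo hDc hDb hDne hfr hDΩ
  obtain ⟨K, hK, hspeed⟩ := hCν.exists_norm_le_of_kobMetric_le hΩb hDΩ hr hloc hlam.le
    (show 0 < 1 + lam * (1 + 4 * α) by positivity)
  have hlim : Tendsto (fun N : ℝ => K * (2 * (N ^ (-ν) / ν))) atTop (𝓝 0) := by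
    simpa using (((tendsto_rpow_neg_atTop hν).div_const ν).const_mul 2).const_mul K
  obtain ⟨N, hN, hκ, hNε⟩ := ((eventually_ge_atTop 1).and
    ((eventually_ge_atTop κ).and (hlim.eventually_lt_const hε))).exists
  refine ⟨Real.exp (-N), Real.exp_pos _, fun σ g a b hab hσ hball hnear => ?_⟩
  have hσD : MapsTo σ (Icc a b) D := fun t ht =>
    hloc ⟨hσ.1 ht, closedBall_subset_ball (by linarith) (hball ht)⟩
  obtain ⟨t₀, ht₀, hmax⟩ := isCompact_Icc.exists_isMaxOn (nonempty_Icc.2 hab)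
    ((continuous_bdist D).comp_continuousOn (hσ.2.1.continuousOn hab))
  rw [dist_comm, dist_eq_norm]
  refine (hσ.2.1.norm_sub_le_of_norm_deriv_le hK (by positivity) hν ht₀ ?_).trans_lt hNε
  filter_upwards [hσ.2.2.2] with t hkob ht
  exact hspeed (σ t) ⟨hσD ht, hball ht⟩ (g t) _ (by positivity)
    (hσ.add_abs_sub_le hlam hσD hα hdist hN hκ (fun s hs => bdist_pos hDo hfr (hσD hs))
      (fun s hs => (hnear s hs).le) ht₀ hmax ht) (hkob ht)

theorem statement_5_general [FiniteDimensional ℂ E] {U : Set E} {ξ ξ' : E}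
    (hΩb : Bornology.IsBounded Ω) (hU : U ∈ 𝓝 ξ) (hlog : LogTypeConvex (Ω ∩ U)) (hne : ξ ≠ ξ')
    (hlam : 0 < lam) (κ : ℝ) :
    ∃ ε : ℝ, 0 < ε ∧ ∃ A : Set E, IsCompact A ∧ A ⊆ Ω ∩ U ∧
      ∀ z ∈ Ω ∩ ball ξ ε, ∀ w ∈ Ω ∩ ball ξ' ε,
      ∀ (T : ℝ) (σ g : ℝ → E), 0 ≤ T →
        AlmostGeodesicOn Ω lam κ σ g 0 T → σ 0 = z → σ T = w →
        ∃ t ∈ Icc (0 : ℝ) T, σ t ∈ A := by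
  have := FiniteDimensional.proper ℂ E
  have := FiniteDimensional.complete ℂ E
  have : Nontrivial E := ⟨ξ, ξ', hne⟩
  obtain ⟨r₀, hr₀, hr₀U⟩ := Metric.mem_nhds_iff.1 hU
  obtain ⟨r, hr, hrr₀, hrξ⟩ : ∃ r > 0, 2 * r ≤ r₀ ∧ 2 * r ≤ dist ξ ξ' :=
    ⟨min r₀ (dist ξ ξ') / 2, half_pos (lt_min hr₀ (dist_pos.2 hne)),
      by linarith [min_le_left r₀ (dist ξ ξ')], by linarith [min_le_right r₀ (dist ξ ξ')]⟩
  have hloc : Ω ∩ ball ξ (2 * r) ⊆ Ω ∩ U :=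
    inter_subset_inter_right Ω ((ball_subset_ball hrr₀).trans hr₀U)
  obtain ⟨η, hη, hshort⟩ :=
    hlog.exists_dist_lt_of_bdist_lt hΩb inter_subset_left hr hloc hlam κ (half_pos hr)
  obtain ⟨C, ν, -, -, hDb, -⟩ := id hlog
  refine ⟨r / 2, half_pos hr, {x ∈ Ω ∩ U | η ≤ bdist (Ω ∩ U) x}, isCompact_setOf_le_bdist hDb hη,
    sep_subset _ _, ?_⟩
  rintro _ ⟨-, hz⟩ _ ⟨-, hw⟩ T σ g hT hσ rfl rfl
  by_contra! hmiss
  rw [mem_ball] at hz hw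
  obtain ⟨t, ht, htr, hin⟩ := exists_first_eq (f := fun s => dist (σ s) ξ) (r := r) hT
    ((continuous_id.dist continuous_const).comp_continuousOn (hσ.2.1.continuousOn hT)) (by linarith)
    (by linarith [dist_triangle_left ξ ξ' (σ T)])
  have hsub : Icc 0 t ⊆ Icc 0 T := Icc_subset_Icc_right ht.2
  have hdist : dist (σ 0) (σ t) < r / 2 :=
    hshort σ g 0 t ht.1 (hσ.mono_right ht) hin fun s hs => lt_of_not_ge fun hηs =>
      hmiss s (hsub hs) ⟨hloc ⟨hσ.1 (hsub hs), mem_ball.2 (by linarith [hin s hs])⟩, hηs⟩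
  linarith [dist_triangle_left (σ t) ξ (σ 0)]

end Visibility

theorem statement_5 {n : ℕ} (hn : 2 ≤ n)
    (Ω U : Set (EuclideanSpace ℂ (Fin n)))
    (hΩo : IsOpen Ω) (hΩc : IsConnected Ω) (hΩb : Bornology.IsBounded Ω)
    (hUo : IsOpen U)
    (hlog : LogTypeConvex (Ω ∩ U))
    (κ : ℝ) (hκ : 0 ≤ κ)
    (ξ ξ' : EuclideanSpace ℂ (Fin n)) (hξ : ξ ∈ frontier Ω ∩ U) (hξ' : ξ' ∈ frontier Ω ∩ U)
    (hne : ξ ≠ ξ') :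
    ∃ ε : ℝ, 0 < ε ∧ ∃ A : Set (EuclideanSpace ℂ (Fin n)), IsCompact A ∧ A ⊆ Ω ∩ U ∧
      ∀ z ∈ Ω ∩ ball ξ ε, ∀ w ∈ Ω ∩ ball ξ' ε,
      ∀ (T : ℝ) (σ g : ℝ → EuclideanSpace ℂ (Fin n)), 0 ≤ T →
        AlmostGeodesicOn Ω 1 κ σ g 0 T → σ 0 = z → σ T = w →
        ∃ t ∈ Icc (0:ℝ) T, σ t ∈ A :=
  statement_5_general hΩb (hUo.mem_nhds hξ.2) hlog hne one_pos κ
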